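/- arXiv:2509.07779 — 3 statements merged into one kernel-verified Lean document; each statement's English description precedes it below -/
import Mathlib

section
/- Let n ≥ 1, let W be an n×n symmetric doubly stochastic real matrix with σ₂(W) < 1, let y₁, …, yₙ be points of a real inner product space, and let ȳ = (1/n)∑_{i=1}^n yᵢ be their mean. Then ∑_{i=1}^n ‖yᵢ − ȳ‖² ≤ (1/(2(1 − σ₂(W)))) · ∑_{i=1}^n ∑_{j=1}^n W i j ‖yᵢ − yⱼ‖². Equivalently, the variance (1/n)∑_i ‖yᵢ − ȳ‖² is at most (1/(2n(1 − σ₂(W)))) ∑_{i,j} W i j ‖yᵢ − yⱼ‖². -/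
open scoped BigOperators

/-- `σ₂(W)`: the operator norm of `W − (1/n)𝟙𝟙ᵀ` acting on Euclidean `n`-space. -/
noncomputable def sigma2 {n : ℕ} (W : Matrix (Fin n) (Fin n) ℝ) : ℝ :=
  ‖(Matrix.toEuclideanCLM (𝕜 := ℝ) (W - (n : ℝ)⁻¹ • Matrix.of fun _ _ => (1 : ℝ)) :
      EuclideanSpace ℝ (Fin n) →L[ℝ] EuclideanSpace ℝ (Fin n))‖

/-!
Taking coordinates in an orthonormal basis of the span of the `z i` turns the quadratic form
`∑ i, ∑ j, A i j * ⟪z i, z j⟫` into a sum of scalar quadratic forms of `A`, so it is at most `‖A‖`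
times the energy `∑ i, ‖z i‖ ^ 2`. If `∑ i, z i = 0`, then `W` and `W − (1/n)𝟙𝟙ᵀ` have the same
form, and the bound holds for `W` with `σ₂(W)` in place of `‖W‖`. Since rows and columns of `W` sum
to `1`, expanding the squares gives
`∑ i, ∑ j, W i j * ‖z i - z j‖ ^ 2 = 2 * ∑ i, ‖z i‖ ^ 2 - 2 * ∑ i, ∑ j, W i j * ⟪z i, z j⟫`,
and the inequality follows for `z i = y i - ybar`.
-/

section QuadraticForm

variable {ι κ τ E : Type*} [Fintype ι] [Fintype κ] [Fintype τ]
  [NormedAddCommGroup E] [InnerProductSpace ℝ E]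

theorem sum_mul_inner_eq_sum_dotProduct_mulVec (b : OrthonormalBasis τ ℝ E)
    (A : Matrix ι κ ℝ) (z : ι → E) (w : κ → E) :
    ∑ i, ∑ j, A i j * inner ℝ (z i) (w j) =
      ∑ k, (fun i => inner ℝ (b k) (z i)) ⬝ᵥ A.mulVec fun j => inner ℝ (b k) (w j) := by
  have expand (i : ι) (j : κ) : A i j * inner ℝ (z i) (w j) =
      ∑ k, inner ℝ (b k) (z i) * (A i j * inner ℝ (b k) (w j)) := by
    simp only [← b.sum_inner_mul_inner (z i) (w j), Finset.mul_sum, mul_left_comm,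
      real_inner_comm (b _) (z i)]
  simp only [expand, dotProduct, Matrix.mulVec, Finset.mul_sum]
  exact Finset.sum_comm_cycle

theorem dotProduct_mulVec_le_norm_toEuclideanCLM_mul [DecidableEq ι] (A : Matrix ι ι ℝ)
    (x : ι → ℝ) :
    x ⬝ᵥ A.mulVec x ≤ ‖Matrix.toEuclideanCLM (𝕜 := ℝ) A‖ * (x ⬝ᵥ x) := by
  set T := Matrix.toEuclideanCLM (𝕜 := ℝ) A
  calc x ⬝ᵥ A.mulVec x
      = inner ℝ (WithLp.toLp 2 x) (T (WithLp.toLp 2 x)) :=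
        (Matrix.inner_toEuclideanCLM A (WithLp.toLp 2 x) (WithLp.toLp 2 x)).symm
    _ ≤ ‖WithLp.toLp 2 x‖ * (‖T‖ * ‖WithLp.toLp 2 x‖) :=
        (real_inner_le_norm _ _).trans (by gcongr; exact T.le_opNorm _)
    _ = ‖T‖ * (x ⬝ᵥ x) := by
        rw [mul_left_comm, ← real_inner_self_eq_norm_mul_norm, EuclideanSpace.inner_toLp_toLp,
          star_trivial]

theorem sum_mul_inner_le_norm_toEuclideanCLM_mul [DecidableEq ι] (A : Matrix ι ι ℝ)
    (z : ι → E) :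
    ∑ i, ∑ j, A i j * inner ℝ (z i) (z j) ≤
      ‖Matrix.toEuclideanCLM (𝕜 := ℝ) A‖ * ∑ i, ‖z i‖ ^ 2 := by
  let S := Submodule.span ℝ (Set.range z)
  have : FiniteDimensional ℝ S := .span_of_finite ℝ (Set.finite_range z)
  let b := stdOrthonormalBasis ℝ S
  let z' : ι → S := fun i => ⟨z i, Submodule.subset_span (Set.mem_range_self i)⟩
  let x k i := inner ℝ (b k) (z' i)
  have sum_eq (B : Matrix ι ι ℝ) :
      ∑ i, ∑ j, B i j * inner ℝ (z i) (z j) = ∑ k, x k ⬝ᵥ B.mulVec (x k) :=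
    sum_mul_inner_eq_sum_dotProduct_mulVec b B z' z'
  have sum_norm_sq : ∑ i, ‖z i‖ ^ 2 = ∑ k, x k ⬝ᵥ x k := by
    simpa [Matrix.one_apply] using sum_eq 1
  rw [sum_eq, sum_norm_sq, Finset.mul_sum]
  exact Finset.sum_le_sum fun k _ => dotProduct_mulVec_le_norm_toEuclideanCLM_mul A (x k)

theorem sum_mul_norm_sub_sq_of_sum_eq_one {W : Matrix ι κ ℝ}
    (hrow : ∀ i, ∑ j, W i j = 1) (hcol : ∀ j, ∑ i, W i j = 1) (z : ι → E) (w : κ → E) :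
    ∑ i, ∑ j, W i j * ‖z i - w j‖ ^ 2 =
      ∑ i, ‖z i‖ ^ 2 + ∑ j, ‖w j‖ ^ 2 - 2 * ∑ i, ∑ j, W i j * inner ℝ (z i) (w j) := by
  have sum_row : ∑ i, ∑ j, W i j * ‖z i‖ ^ 2 = ∑ i, ‖z i‖ ^ 2 := by
    simp only [← Finset.sum_mul, hrow, one_mul]
  have sum_col : ∑ i, ∑ j, W i j * ‖w j‖ ^ 2 = ∑ j, ‖w j‖ ^ 2 := by
    rw [Finset.sum_comm]
    simp only [← Finset.sum_mul, hcol, one_mul]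
  have expand (i : ι) (j : κ) : W i j * ‖z i - w j‖ ^ 2 =
      W i j * ‖z i‖ ^ 2 + W i j * ‖w j‖ ^ 2 - 2 * (W i j * inner ℝ (z i) (w j)) := by
    rw [norm_sub_sq_real]
    ring
  simp only [expand, Finset.sum_sub_distrib, Finset.sum_add_distrib, ← Finset.mul_sum,
    sum_row, sum_col]

end QuadraticForm

theorem sum_sub_inv_card_smul_sum_eq_zero {ι 𝕜 V : Type*} [Fintype ι] [Nonempty ι] [DivisionRing 𝕜]
    [CharZero 𝕜] [AddCommGroup V] [Module 𝕜 V] (y : ι → V) :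
    ∑ i, (y i - (Fintype.card ι : 𝕜)⁻¹ • ∑ j, y j) = 0 := by
  have card_ne_zero : (Fintype.card ι : 𝕜) ≠ 0 := Nat.cast_ne_zero.mpr Fintype.card_ne_zero
  rw [Finset.sum_sub_distrib, Finset.sum_const, Finset.card_univ, ← Nat.cast_smul_eq_nsmul 𝕜,
    smul_inv_smul₀ card_ne_zero, sub_self]

section Sigma2

variable {n : ℕ} {E : Type*} [NormedAddCommGroup E] [InnerProductSpace ℝ E]

theorem sum_mul_inner_le_sigma2_mul (W : Matrix (Fin n) (Fin n) ℝ) {z : Fin n → E}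
    (hz : ∑ i, z i = 0) :
    ∑ i, ∑ j, W i j * inner ℝ (z i) (z j) ≤ sigma2 W * ∑ i, ‖z i‖ ^ 2 := by
  have sum_inner_eq_zero : ∑ i, ∑ j, inner ℝ (z i) (z j) = 0 := by
    simp only [← inner_sum, hz, inner_zero_right, Finset.sum_const_zero]
  let M := W - (n : ℝ)⁻¹ • Matrix.of fun _ _ => (1 : ℝ)
  calc ∑ i, ∑ j, W i j * inner ℝ (z i) (z j)
      = ∑ i, ∑ j, M i j * inner ℝ (z i) (z j) := by
        simp only [M, Matrix.sub_apply, Matrix.smul_apply, Matrix.of_apply, smul_eq_mul, mul_one,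
          sub_mul, Finset.sum_sub_distrib, ← Finset.mul_sum, sum_inner_eq_zero, mul_zero, sub_zero]
    _ ≤ sigma2 W * ∑ i, ‖z i‖ ^ 2 := sum_mul_inner_le_norm_toEuclideanCLM_mul M z

theorem two_mul_one_sub_sigma2_mul_sum_norm_sq_le {W : Matrix (Fin n) (Fin n) ℝ}
    (hrow : ∀ i, ∑ j, W i j = 1) (hcol : ∀ j, ∑ i, W i j = 1) {z : Fin n → E}
    (hz : ∑ i, z i = 0) :
    2 * (1 - sigma2 W) * ∑ i, ‖z i‖ ^ 2 ≤ ∑ i, ∑ j, W i j * ‖z i - z j‖ ^ 2 := by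
  rw [sum_mul_norm_sub_sq_of_sum_eq_one hrow hcol]
  linarith [sum_mul_inner_le_sigma2_mul W hz]

end Sigma2

theorem stmt1_general {n : ℕ} (hn : 1 ≤ n) (W : Matrix (Fin n) (Fin n) ℝ)
    (hrow : ∀ i, ∑ j, W i j = 1)
    (hcol : ∀ j, ∑ i, W i j = 1)
    (hσ : sigma2 W < 1)
    {E : Type*} [NormedAddCommGroup E] [InnerProductSpace ℝ E]
    (y : Fin n → E) (ybar : E) (hybar : ybar = (n : ℝ)⁻¹ • ∑ i, y i) :
    (∑ i, ‖y i - ybar‖ ^ 2 ≤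
      (1 / (2 * (1 - sigma2 W))) * ∑ i, ∑ j, W i j * ‖y i - y j‖ ^ 2) ∧
    ((n : ℝ)⁻¹ * ∑ i, ‖y i - ybar‖ ^ 2 ≤
      (1 / (2 * n * (1 - sigma2 W))) * ∑ i, ∑ j, W i j * ‖y i - y j‖ ^ 2) := by
  have : Nonempty (Fin n) := ⟨⟨0, hn⟩⟩
  have centred : ∑ i, (y i - ybar) = 0 := by
    simpa only [hybar, Fintype.card_fin] using sum_sub_inv_card_smul_sum_eq_zero (𝕜 := ℝ) y
  have poincare : 2 * (1 - sigma2 W) * ∑ i, ‖y i - ybar‖ ^ 2 ≤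
      ∑ i, ∑ j, W i j * ‖y i - y j‖ ^ 2 := by
    simpa only [sub_sub_sub_cancel_right] using
      two_mul_one_sub_sigma2_mul_sum_norm_sq_le hrow hcol centred
  have gap_pos : 0 < 2 * (1 - sigma2 W) := by linarith
  have sum_le : ∑ i, ‖y i - ybar‖ ^ 2 ≤
      (1 / (2 * (1 - sigma2 W))) * ∑ i, ∑ j, W i j * ‖y i - y j‖ ^ 2 := by
    rwa [one_div_mul_eq_div, le_div_iff₀' gap_pos]
  refine ⟨sum_le, ?_⟩
  calc (n : ℝ)⁻¹ * ∑ i, ‖y i - ybar‖ ^ 2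
      ≤ (n : ℝ)⁻¹ * ((1 / (2 * (1 - sigma2 W))) * ∑ i, ∑ j, W i j * ‖y i - y j‖ ^ 2) := by
        gcongr
    _ = (1 / (2 * n * (1 - sigma2 W))) * ∑ i, ∑ j, W i j * ‖y i - y j‖ ^ 2 := by
        field_simp

theorem stmt1 {n : ℕ} (hn : 1 ≤ n) (W : Matrix (Fin n) (Fin n) ℝ)
    (hsymm : W.IsSymm)
    (hnonneg : ∀ i j, 0 ≤ W i j)
    (hrow : ∀ i, ∑ j, W i j = 1)
    (hcol : ∀ j, ∑ i, W i j = 1)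
    (hσ : sigma2 W < 1)
    {E : Type*} [NormedAddCommGroup E] [InnerProductSpace ℝ E]
    (y : Fin n → E) (ybar : E) (hybar : ybar = (n : ℝ)⁻¹ • ∑ i, y i) :
    (∑ i, ‖y i - ybar‖ ^ 2 ≤
      (1 / (2 * (1 - sigma2 W))) * ∑ i, ∑ j, W i j * ‖y i - y j‖ ^ 2) ∧
    ((n : ℝ)⁻¹ * ∑ i, ‖y i - ybar‖ ^ 2 ≤
      (1 / (2 * n * (1 - sigma2 W))) * ∑ i, ∑ j, W i j * ‖y i - y j‖ ^ 2) :=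
  stmt1_general hn W hrow hcol hσ y ybar hybar
end

section
/- In the setting of the decentralized online projected gradient descent algorithm on a nonempty closed convex set X of diameter at most D in a real Hilbert space (n agents, symmetric doubly stochastic W with σ₂ := ‖W − (1/n)𝟙𝟙ᵀ‖ < 1, ρ := 1 − (1 − σ₂)/4, convex L-Lipschitz losses f_{i,t} with subgradients g_{i,t} of norm at most L, updates y_{i,t+1} = P_X(x_{i,t} − η g_{i,t}) and x_{i,t+1} = y_{i,t+1} + (1/2)∑_j W i j (y_{j,t+1} − y_{i,t+1}), common start x_{i,1} = x₁ ∈ X), if L > 0 and the gradient step-size is chosen as η = (D/(L√T)) · (8√n/(1 − ρ) + 1)^{−1/2}, then for every x* ∈ X the static regret satisfies (1/n)∑_{t=1}^T ∑_{i=1}^n f_t(x_{i,t}) − ∑_{t=1}^T f_t(x*) ≤ D L √T · √(8√n/(1 − ρ) + 1), where f_t = (1/n)∑_i f_{i,t}. -/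
open scoped BigOperators RealInnerProductSpace

/-!
With `J = (1/n)𝟙𝟙ᵀ`, the mixing step multiplies the family of iterates by the doubly stochastic
matrix `M = (I + W)/2`, whose distance to `J` is at most `(1 + σ₂)/2 ≤ ρ`. A matrix acts on families
of vectors of an inner product space with the same `ℓ²` operator norm as on `ℝⁿ`, which gives two
estimates. The distance of the iterates to consensus is contracted by `ρ` in each mixing step, while
a projected gradient step increases it by at most `√n η L`, so it never exceeds `√n η L / (1 - ρ)`.
And mixing does not increase `∑ i, ‖x i - w‖²`, so the usual telescoping argument for projected
gradient descent bounds the regret of the losses linearized at each agent's own iterate. Evaluating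
every loss at the iterate of one fixed agent instead costs `2 L` times the distance to consensus
per round. Hence each agent separately has regret at most
`(‖x₁ - w‖² + T (η L)² (4 √n / (1 - ρ) + 1)) / (2 η)`.
-/

section OperatorNorm

open scoped Matrix Matrix.Module Matrix.Norms.L2Operator MatrixOrder

variable {ι H : Type*} [Fintype ι] [DecidableEq ι] [NormedAddCommGroup H] [InnerProductSpace ℝ H]

theorem posSemidef_l2_opNorm_sq_smul_one_sub (B : Matrix ι ι ℝ) :
    (‖B‖ ^ 2 • (1 : Matrix ι ι ℝ) - Bᵀ * B).PosSemidef := by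
  refine .of_dotProduct_mulVec_nonneg ?_ fun v => ?_
  · simp [Matrix.IsHermitian]
  have hB := pow_le_pow_left₀ (norm_nonneg _) (B.l2_opNorm_mulVec (WithLp.toLp 2 v)) 2
  have hv : v ⬝ᵥ v = ∑ i, ‖v i‖ ^ 2 := by simp [dotProduct, sq]
  have hBv : v ⬝ᵥ (Bᵀ * B) *ᵥ v = ∑ i, ‖(B *ᵥ v) i‖ ^ 2 := by
    rw [← Matrix.mulVec_mulVec, Matrix.dotProduct_mulVec, Matrix.vecMul_transpose]
    simp [dotProduct, sq]
  simp only [star_trivial, Matrix.sub_mulVec, Matrix.smul_mulVec, Matrix.one_mulVec,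
    dotProduct_sub, dotProduct_smul, smul_eq_mul, hv, hBv]
  simpa [mul_pow, EuclideanSpace.norm_sq_eq] using hB

theorem sum_norm_sq_matrix_smul (B : Matrix ι ι ℝ) (v : ι → H) :
    ∑ i, ‖(B • v) i‖ ^ 2 = ∑ j, ∑ k, (Bᵀ * B) j k * ⟪v j, v k⟫ := by
  simp_rw [Matrix.Module.smul_apply, ← real_inner_self_eq_norm_sq, sum_inner, inner_sum,
    real_inner_smul_left, real_inner_smul_right, Matrix.mul_apply, Matrix.transpose_apply,
    Finset.sum_mul]
  rw [Finset.sum_comm]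
  refine Finset.sum_congr rfl fun j _ => ?_
  rw [Finset.sum_comm]
  exact Finset.sum_congr rfl fun k _ => Finset.sum_congr rfl fun i _ => by ring

-- With `‖B‖² • 1 - Bᵀ * B = Cᵀ * C`, the difference of the two sides is `∑ i, ‖(C • v) i‖ ^ 2`.
theorem sum_norm_sq_matrix_smul_le (B : Matrix ι ι ℝ) (v : ι → H) :
    ∑ i, ‖(B • v) i‖ ^ 2 ≤ ‖B‖ ^ 2 * ∑ i, ‖v i‖ ^ 2 := by
  obtain ⟨C, hC⟩ := CStarAlgebra.nonneg_iff_eq_star_mul_self.1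
    (posSemidef_l2_opNorm_sq_smul_one_sub B).nonneg
  rw [Matrix.star_eq_conjTranspose, Matrix.conjTranspose_eq_transpose_of_trivial] at hC
  have hnonneg : 0 ≤ ∑ i, ‖(C • v) i‖ ^ 2 := by positivity
  rw [sum_norm_sq_matrix_smul, ← hC] at hnonneg
  rw [sum_norm_sq_matrix_smul, ← sub_nonneg]
  simpa [sub_mul, Matrix.one_apply, Finset.mul_sum] using hnonneg

theorem norm_toLp_matrix_smul_le (B : Matrix ι ι ℝ) (v : ι → H) :
    ‖WithLp.toLp 2 (B • v)‖ ≤ ‖B‖ * ‖WithLp.toLp 2 v‖ := by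
  refine le_of_sq_le_sq ?_ (by positivity)
  simpa only [mul_pow, PiLp.norm_sq_eq_of_L2] using sum_norm_sq_matrix_smul_le B v

theorem matrix_smul_sub_const {M : Matrix ι ι ℝ} (hM : ∀ i, ∑ j, M i j = 1) (v : ι → H) (w : H)
    (i : ι) : (M • fun j => v j - w) i = (M • v) i - w := by
  simp [smul_sub, ← Finset.sum_smul, hM]

theorem sum_norm_sq_doublyStochastic_smul_sub_le {M : Matrix ι ι ℝ}
    (hM : M ∈ doublyStochastic ℝ ι) (v : ι → H) (w : H) :
    ∑ i, ‖(M • v) i - w‖ ^ 2 ≤ ∑ i, ‖v i - w‖ ^ 2 := by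
  simp_rw [← matrix_smul_sub_const (sum_row_of_mem_doublyStochastic hM)]
  refine (sum_norm_sq_matrix_smul_le M _).trans (mul_le_of_le_one_left (by positivity) ?_)
  exact pow_le_one₀ (norm_nonneg _) (Matrix.l2_opNorm_le_one_of_mem_doublyStochastic hM)

end OperatorNorm

section Consensus

open scoped Matrix Matrix.Module Matrix.Norms.L2Operator

/-- The matrix `(1/n)𝟙𝟙ᵀ`, with `n` the cardinality of `ι`; it replaces each entry of a family
indexed by `ι` by the mean of the family. -/
noncomputable def averagingMatrix (ι : Type*) [Fintype ι] : Matrix ι ι ℝ :=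
  (Fintype.card ι : ℝ)⁻¹ • Matrix.of fun _ _ => 1

theorem sigma2_eq {n : ℕ} (W : Matrix (Fin n) (Fin n) ℝ) :
    sigma2 W = ‖W - averagingMatrix (Fin n)‖ := by
  rw [sigma2, Matrix.l2_opNorm_toEuclideanCLM, averagingMatrix, Fintype.card_fin]

variable {ι : Type*} [Fintype ι]

theorem mul_averagingMatrix {M : Matrix ι ι ℝ} (hM : ∀ i, ∑ j, M i j = 1) :
    M * averagingMatrix ι = averagingMatrix ι := by
  ext i j
  simp [averagingMatrix, Matrix.mul_apply, ← Finset.sum_mul, hM]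

theorem averagingMatrix_mul {M : Matrix ι ι ℝ} (hM : ∀ j, ∑ i, M i j = 1) :
    averagingMatrix ι * M = averagingMatrix ι := by
  ext i j
  simp [averagingMatrix, Matrix.mul_apply, ← Finset.mul_sum, hM]

theorem isStarProjection_averagingMatrix [Nonempty ι] : IsStarProjection (averagingMatrix ι) where
  isIdempotentElem := mul_averagingMatrix fun i => by simp [averagingMatrix]
  isSelfAdjoint := by ext i j; simp [averagingMatrix]

variable [DecidableEq ι]

theorem l2_opNorm_one_sub_averagingMatrix_le [Nonempty ι] : ‖1 - averagingMatrix ι‖ ≤ 1 :=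
  isStarProjection_averagingMatrix.one_sub.norm_le

/-- The lazy version `(I + W)/2` of a mixing matrix `W`, in which every agent gives weight `1/2` to
its own value. -/
noncomputable def lazyMatrix (W : Matrix ι ι ℝ) : Matrix ι ι ℝ := (2 : ℝ)⁻¹ • (1 + W)

theorem lazyMatrix_mem_doublyStochastic {W : Matrix ι ι ℝ} (hW : W ∈ doublyStochastic ℝ ι) :
    lazyMatrix W ∈ doublyStochastic ℝ ι := by
  rw [lazyMatrix, smul_add]
  exact convex_doublyStochastic (one_mem _) hW (by norm_num) (by norm_num) (by norm_num)

theorem l2_opNorm_lazyMatrix_sub_averagingMatrix_le [Nonempty ι] (W : Matrix ι ι ℝ) :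
    ‖lazyMatrix W - averagingMatrix ι‖ ≤ (1 + ‖W - averagingMatrix ι‖) / 2 := by
  have hsplit : lazyMatrix W - averagingMatrix ι =
      (2 : ℝ)⁻¹ • ((1 - averagingMatrix ι) + (W - averagingMatrix ι)) := by
    rw [lazyMatrix]; module
  rw [hsplit, norm_smul, Real.norm_of_nonneg (by norm_num)]
  linarith [norm_add_le (1 - averagingMatrix ι) (W - averagingMatrix ι),
    l2_opNorm_one_sub_averagingMatrix_le (ι := ι)]

variable {H : Type*} [NormedAddCommGroup H] [InnerProductSpace ℝ H]

theorem lazyMatrix_smul_apply {W : Matrix ι ι ℝ} (hW : ∀ i, ∑ j, W i j = 1) (v : ι → H) (i : ι) :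
    (lazyMatrix W • v) i = v i + (2 : ℝ)⁻¹ • ∑ j, W i j • (v j - v i) := by
  rw [lazyMatrix, smul_assoc, add_smul, one_smul]
  simp only [Pi.smul_apply, Pi.add_apply, Matrix.Module.smul_apply, smul_sub,
    Finset.sum_sub_distrib, ← Finset.sum_smul, hW]
  module

/-- The `ℓ²` distance of a family of vectors to the constant families: the norm of the family of
deviations from the mean. -/
noncomputable def dispersion (v : ι → H) : ℝ := ‖WithLp.toLp 2 ((1 - averagingMatrix ι) • v)‖

theorem dispersion_const [Nonempty ι] (a : H) : dispersion (fun _ : ι => a) = 0 := by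
  have hzero : ((1 : Matrix ι ι ℝ) - averagingMatrix ι) • (fun _ : ι => a) = 0 := by
    ext i
    rw [sub_smul, one_smul]
    simp [averagingMatrix, ← Nat.cast_smul_eq_nsmul ℝ, smul_smul]
  rw [dispersion, hzero, WithLp.toLp_zero, norm_zero]

theorem norm_sub_le_two_mul_dispersion (v : ι → H) (i j : ι) :
    ‖v i - v j‖ ≤ 2 * dispersion v := by
  set d := (1 - averagingMatrix ι) • v with hd
  have hdev : v i - v j = d i - d j := by
    rw [hd, sub_smul, one_smul]
    simp [averagingMatrix]
  have hle : ∀ k, ‖d k‖ ≤ dispersion v := PiLp.norm_apply_le (WithLp.toLp 2 d)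
  rw [hdev]
  linarith [norm_sub_le (d i) (d j), hle i, hle j]

theorem dispersion_add_le (u v : ι → H) : dispersion (u + v) ≤ dispersion u + dispersion v := by
  simpa only [dispersion, smul_add, WithLp.toLp_add] using norm_add_le _ _

theorem dispersion_le_sqrt_card_mul [Nonempty ι] {v : ι → H} {c : ℝ} (hv : ∀ i, ‖v i‖ ≤ c) :
    dispersion v ≤ √(Fintype.card ι) * c := by
  have hc : 0 ≤ c := (norm_nonneg _).trans (hv (Classical.arbitrary ι))
  calc dispersion v ≤ ‖1 - averagingMatrix ι‖ * ‖WithLp.toLp 2 v‖ := norm_toLp_matrix_smul_le _ _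
    _ ≤ ‖WithLp.toLp 2 v‖ :=
      mul_le_of_le_one_left (norm_nonneg _) l2_opNorm_one_sub_averagingMatrix_le
    _ ≤ √(Fintype.card ι) * c := by
      refine le_of_sq_le_sq ?_ (by positivity)
      rw [PiLp.norm_sq_eq_of_L2, mul_pow, Real.sq_sqrt (Nat.cast_nonneg _), ← nsmul_eq_mul]
      exact Finset.sum_le_card_nsmul _ _ _ fun i _ => pow_le_pow_left₀ (norm_nonneg _) (hv i) 2

-- `(I - J)M = M - J = (M - J)(I - J)` for the averaging matrix `J`.
theorem dispersion_doublyStochastic_smul_le [Nonempty ι] {M : Matrix ι ι ℝ}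
    (hM : M ∈ doublyStochastic ℝ ι) (v : ι → H) :
    dispersion (M • v) ≤ ‖M - averagingMatrix ι‖ * dispersion v := by
  have hcomm : (1 - averagingMatrix ι) * M =
      (M - averagingMatrix ι) * (1 - averagingMatrix ι) := by
    simp only [sub_mul, mul_sub, one_mul, mul_one,
      mul_averagingMatrix (sum_row_of_mem_doublyStochastic hM),
      averagingMatrix_mul (sum_col_of_mem_doublyStochastic hM),
      isStarProjection_averagingMatrix.isIdempotentElem.eq, sub_self, sub_zero]
  rw [dispersion, smul_smul, hcomm, ← smul_smul]
  exact norm_toLp_matrix_smul_le _ _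

end Consensus

section AverageLoss

variable {ι H : Type*} [Fintype ι]

/-- The network loss `(1/n) ∑ i, F i` of a family `F` of `n` local losses. -/
noncomputable def averageLoss (F : ι → H → ℝ) (w : H) : ℝ :=
  (Fintype.card ι : ℝ)⁻¹ * ∑ i, F i w

theorem averageLoss_sub_le_of_subgradient [DecidableEq ι] [Nonempty ι] [NormedAddCommGroup H]
    [InnerProductSpace ℝ H] {X : Set H} {F : ι → H → ℝ} {L : ℝ} (hL : 0 ≤ L)
    (hlip : ∀ j, ∀ a ∈ X, ∀ b ∈ X, |F j a - F j b| ≤ L * ‖a - b‖)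
    {v g : ι → H} (hv : ∀ j, v j ∈ X) {w : H}
    (hsub : ∀ j, F j (v j) + ⟪g j, w - v j⟫ ≤ F j w) (i : ι) :
    averageLoss F (v i) - averageLoss F w ≤
      (Fintype.card ι : ℝ)⁻¹ * ∑ j, ⟪g j, v j - w⟫ + 2 * L * dispersion v := by
  have hterm : ∀ j, F j (v i) - F j w ≤ ⟪g j, v j - w⟫ + 2 * L * dispersion v := fun j => by
    have hdrift : F j (v i) - F j (v j) ≤ L * (2 * dispersion v) :=
      (le_abs_self _).trans <| (hlip j _ (hv i) _ (hv j)).trans <|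
        mul_le_mul_of_nonneg_left (norm_sub_le_two_mul_dispersion v i j) hL
    have hlin := hsub j
    rw [← neg_sub (v j), inner_neg_right] at hlin
    linarith
  calc averageLoss F (v i) - averageLoss F w
      = (Fintype.card ι : ℝ)⁻¹ * ∑ j, (F j (v i) - F j w) := by
        rw [averageLoss, averageLoss, Finset.sum_sub_distrib, mul_sub]
    _ ≤ (Fintype.card ι : ℝ)⁻¹ * ∑ j, (⟪g j, v j - w⟫ + 2 * L * dispersion v) := by
        gcongr with j
        exact hterm j
    _ = _ := by
        simp [Finset.sum_add_distrib, mul_add]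

theorem inv_card_mul_sum_sum_sub_le [Nonempty ι] {τ : Type*} {s : Finset τ} {a : ι → τ → ℝ}
    {b : τ → ℝ} {c : ℝ} (h : ∀ i, ∑ t ∈ s, a i t - ∑ t ∈ s, b t ≤ c) :
    (Fintype.card ι : ℝ)⁻¹ * ∑ t ∈ s, ∑ i, a i t - ∑ t ∈ s, b t ≤ c := by
  have hcard : (0 : ℝ) < Fintype.card ι := by positivity
  rw [sub_le_iff_le_add, inv_mul_le_iff₀ hcard, Finset.sum_comm, ← nsmul_eq_mul]
  exact Finset.sum_le_card_nsmul _ _ _ fun i _ => sub_le_iff_le_add.1 (h i)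

end AverageLoss

theorem norm_sub_le_norm_sub_of_nearest {H : Type*} [NormedAddCommGroup H] [InnerProductSpace ℝ H]
    {X : Set H} (hX : Convex ℝ X) {z p w : H} (hp : p ∈ X)
    (hmin : ∀ a ∈ X, ‖p - z‖ ≤ ‖a - z‖) (hw : w ∈ X) : ‖p - w‖ ≤ ‖z - w‖ := by
  have hne : Nonempty X := ⟨⟨p, hp⟩⟩
  have hinf : ‖z - p‖ = ⨅ w : X, ‖z - w‖ := by
    refine le_antisymm (le_ciInf fun w => ?_) (ciInf_le ⟨0, ?_⟩ (⟨p, hp⟩ : X))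
    · simpa only [norm_sub_rev z] using hmin w w.2
    · rintro _ ⟨w, rfl⟩
      exact norm_nonneg _
  have hobtuse := (norm_eq_iInf_iff_real_inner_le_zero hX hp).1 hinf w hw
  have hexpand : ‖z - w‖ ^ 2 = ‖z - p‖ ^ 2 - 2 * ⟪z - p, w - p⟫ + ‖w - p‖ ^ 2 := by
    rw [← norm_sub_sq_real, sub_sub_sub_cancel_right]
  rw [norm_sub_rev p w]
  refine le_of_sq_le_sq ?_ (norm_nonneg _)
  linarith [sq_nonneg ‖z - p‖]

section OnlineGradientDescent

open scoped Matrix Matrix.Module Matrix.Norms.L2Operator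

variable {ι H : Type*} [Fintype ι] [DecidableEq ι] [NormedAddCommGroup H] [InnerProductSpace ℝ H]

/-- A run of decentralized online projected gradient descent over the rounds `1, …, T`: all agents
start at `x₁`, agent `i` moves from `x i t` along `-g i t` with step-size `η` and takes a nearest
point `y i (t + 1)` of `X`, and the points are then mixed by the matrix `M`. No values of `y` other
than `y i 2, …, y i (T + 1)` are constrained. -/
structure IsDecentralizedOPGD (X : Set H) (M : Matrix ι ι ℝ) (η : ℝ) (T : ℕ) (x₁ : H)
    (g x y : ι → ℕ → H) : Prop where
  init : ∀ i, x i 1 = x₁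
  proj : ∀ i, ∀ t ∈ Finset.Icc 1 T, y i (t + 1) ∈ X ∧
    ∀ w ∈ X, ‖y i (t + 1) - (x i t - η • g i t)‖ ≤ ‖w - (x i t - η • g i t)‖
  mix : ∀ i, ∀ t ∈ Finset.Icc 1 T, x i (t + 1) = (M • fun j => y j (t + 1)) i

namespace IsDecentralizedOPGD

variable {X : Set H} {M : Matrix ι ι ℝ} {η L ρ : ℝ} {T t : ℕ} {x₁ w : H} {g x y : ι → ℕ → H}

theorem mem (h : IsDecentralizedOPGD X M η T x₁ g x y) (hX : Convex ℝ X)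
    (hM : M ∈ doublyStochastic ℝ ι) (hx₁ : x₁ ∈ X) (ht : t ∈ Finset.Icc 1 T) (i : ι) :
    x i t ∈ X := by
  obtain ⟨ht1, htT⟩ := Finset.mem_Icc.1 ht
  obtain rfl | ⟨s, hs, rfl⟩ : t = 1 ∨ ∃ s ∈ Finset.Icc 1 T, t = s + 1 := by
    rcases ht1.eq_or_lt' with rfl | hlt
    · exact .inl rfl
    · exact .inr ⟨t - 1, Finset.mem_Icc.2 (by omega), by omega⟩
  · rwa [h.init]
  · rw [h.mix i s hs]
    exact hX.sum_mem (fun j _ => nonneg_of_mem_doublyStochastic hM)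
      (sum_row_of_mem_doublyStochastic hM i) fun j _ => (h.proj j s hs).1

theorem norm_proj_sub_le (h : IsDecentralizedOPGD X M η T x₁ g x y) (hX : Convex ℝ X)
    (hw : w ∈ X) (ht : t ∈ Finset.Icc 1 T) (i : ι) :
    ‖y i (t + 1) - w‖ ≤ ‖x i t - η • g i t - w‖ :=
  norm_sub_le_norm_sub_of_nearest hX (h.proj i t ht).1 (h.proj i t ht).2 hw

theorem norm_proj_sub_self_le (h : IsDecentralizedOPGD X M η T x₁ g x y) (hX : Convex ℝ X)
    (hM : M ∈ doublyStochastic ℝ ι) (hx₁ : x₁ ∈ X) (ht : t ∈ Finset.Icc 1 T) (i : ι) :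
    ‖y i (t + 1) - x i t‖ ≤ ‖η • g i t‖ := by
  simpa only [sub_sub_cancel_left, norm_neg] using
    h.norm_proj_sub_le hX (h.mem hX hM hx₁ ht i) ht i

theorem eq_start_of_stepSize_eq_zero (h : IsDecentralizedOPGD X M 0 T x₁ g x y)
    (hM : M ∈ doublyStochastic ℝ ι) (hx₁ : x₁ ∈ X) (ht : t ∈ Finset.Icc 1 T) (i : ι) :
    x i t = x₁ := by
  obtain ⟨ht1, htT⟩ := Finset.mem_Icc.1 ht
  induction t, ht1 using Nat.le_induction generalizing i with
  | base => exact h.init i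
  | succ s hs ih =>
    have hs' : s ∈ Finset.Icc 1 T := Finset.mem_Icc.2 ⟨hs, by omega⟩
    have hy : ∀ j, y j (s + 1) = x₁ := fun j => by
      simpa [ih hs' j (by omega), sub_eq_zero] using (h.proj j s hs').2 x₁ hx₁
    simp [h.mix i s hs', hy, ← Finset.sum_smul, sum_row_of_mem_doublyStochastic hM]

-- The bound `K` is the fixed point of `K ↦ ρ K + √n η L`, which dominates the recursion
-- `d (t + 1) ≤ ρ (d t + √n η L)`.
theorem dispersion_le [Nonempty ι] (h : IsDecentralizedOPGD X M η T x₁ g x y) (hX : Convex ℝ X)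
    (hM : M ∈ doublyStochastic ℝ ι) (hMρ : ‖M - averagingMatrix ι‖ ≤ ρ) (hρ : ρ < 1)
    (hx₁ : x₁ ∈ X) (hη : 0 ≤ η) (hL : 0 ≤ L) (hg : ∀ i, ∀ t ∈ Finset.Icc 1 T, ‖g i t‖ ≤ L)
    (ht : t ∈ Finset.Icc 1 T) :
    dispersion (fun i => x i t) ≤ √(Fintype.card ι) * (η * L) / (1 - ρ) := by
  set c := √(Fintype.card ι) * (η * L)
  have hρ0 : 0 ≤ ρ := (norm_nonneg _).trans hMρ
  have hgap : 0 < 1 - ρ := sub_pos.2 hρ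
  have hc0 : 0 ≤ c := by positivity
  obtain ⟨ht1, htT⟩ := Finset.mem_Icc.1 ht
  induction t, ht1 using Nat.le_induction with
  | base =>
    simp only [h.init, dispersion_const]
    positivity
  | succ s hs ih =>
    have hs' : s ∈ Finset.Icc 1 T := Finset.mem_Icc.2 ⟨hs, by omega⟩
    have hstep : dispersion (fun i => y i (s + 1) - x i s) ≤ c :=
      dispersion_le_sqrt_card_mul fun i => by
        refine (h.norm_proj_sub_self_le hX hM hx₁ hs' i).trans ?_
        rw [norm_smul, Real.norm_of_nonneg hη]
        exact mul_le_mul_of_nonneg_left (hg i s hs') hη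
    have hy : dispersion (fun i => y i (s + 1)) ≤ c / (1 - ρ) + c := by
      calc dispersion (fun i => y i (s + 1))
          = dispersion ((fun i => x i s) + fun i => y i (s + 1) - x i s) := by
            congr 1; ext i; simp
        _ ≤ _ := (dispersion_add_le _ _).trans (add_le_add (ih hs' (by omega)) hstep)
    calc dispersion (fun i => x i (s + 1))
        = dispersion (M • fun j => y j (s + 1)) := by
          congr 1; ext i; exact h.mix i s hs'
      _ ≤ ρ * (c / (1 - ρ) + c) :=
          (dispersion_doublyStochastic_smul_le hM _).trans
            (mul_le_mul hMρ hy (norm_nonneg _) hρ0)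
      _ ≤ ρ * (c / (1 - ρ)) + c := by nlinarith
      _ = c / (1 - ρ) := by field_simp; ring

theorem sum_norm_sq_succ_le (h : IsDecentralizedOPGD X M η T x₁ g x y) (hX : Convex ℝ X)
    (hM : M ∈ doublyStochastic ℝ ι) (hη : 0 ≤ η)
    (hg : ∀ i, ∀ t ∈ Finset.Icc 1 T, ‖g i t‖ ≤ L) (hw : w ∈ X) (ht : t ∈ Finset.Icc 1 T) :
    ∑ i, ‖x i (t + 1) - w‖ ^ 2 ≤
      ∑ i, ‖x i t - w‖ ^ 2 - 2 * η * ∑ i, ⟪g i t, x i t - w⟫ +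
        Fintype.card ι * (η * L) ^ 2 := by
  have hagent : ∀ i, ‖y i (t + 1) - w‖ ^ 2 ≤
      ‖x i t - w‖ ^ 2 - 2 * η * ⟪g i t, x i t - w⟫ + (η * L) ^ 2 := fun i => by
    calc ‖y i (t + 1) - w‖ ^ 2 ≤ ‖x i t - η • g i t - w‖ ^ 2 :=
          pow_le_pow_left₀ (norm_nonneg _) (h.norm_proj_sub_le hX hw ht i) 2
      _ = ‖x i t - w‖ ^ 2 - 2 * η * ⟪g i t, x i t - w⟫ + (η * ‖g i t‖) ^ 2 := by
          rw [sub_right_comm, norm_sub_sq_real, real_inner_smul_right, real_inner_comm, norm_smul,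
            Real.norm_of_nonneg hη]
          ring
      _ ≤ _ := by
          gcongr
          exact hg i t ht
  calc ∑ i, ‖x i (t + 1) - w‖ ^ 2 ≤ ∑ i, ‖y i (t + 1) - w‖ ^ 2 := by
        simpa only [← h.mix _ t ht] using
          sum_norm_sq_doublyStochastic_smul_sub_le hM (fun j => y j (t + 1)) w
    _ ≤ _ := Finset.sum_le_sum fun i _ => hagent i
    _ = _ := by
        simp [Finset.sum_add_distrib, Finset.sum_sub_distrib, Finset.mul_sum]

theorem sum_inner_le (h : IsDecentralizedOPGD X M η T x₁ g x y) (hX : Convex ℝ X)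
    (hM : M ∈ doublyStochastic ℝ ι) (hη : 0 ≤ η)
    (hg : ∀ i, ∀ t ∈ Finset.Icc 1 T, ‖g i t‖ ≤ L) (hw : w ∈ X) :
    2 * η * ∑ t ∈ Finset.Icc 1 T, ∑ i, ⟪g i t, x i t - w⟫ ≤
      Fintype.card ι * (‖x₁ - w‖ ^ 2 + T * (η * L) ^ 2) := by
  set V : ℕ → ℝ := fun t => ∑ i, ‖x i t - w‖ ^ 2 with hV
  have hround : ∀ t ∈ Finset.Icc 1 T, 2 * η * ∑ i, ⟪g i t, x i t - w⟫ ≤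
      Fintype.card ι * (η * L) ^ 2 - (V (t + 1) - V t) := fun t ht => by
    linarith [h.sum_norm_sq_succ_le hX hM hη hg hw ht]
  have htel : ∑ t ∈ Finset.Icc 1 T, (V (t + 1) - V t) = V (T + 1) - V 1 :=
    Finset.sum_Ico_sub V (Nat.le_add_left 1 T)
  have hfirst : V 1 = Fintype.card ι * ‖x₁ - w‖ ^ 2 := by simp [hV, h.init]
  have hlast : 0 ≤ V (T + 1) := by positivity
  calc _ = ∑ t ∈ Finset.Icc 1 T, 2 * η * ∑ i, ⟪g i t, x i t - w⟫ := Finset.mul_sum _ _ _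
    _ ≤ ∑ t ∈ Finset.Icc 1 T, (Fintype.card ι * (η * L) ^ 2 - (V (t + 1) - V t)) :=
        Finset.sum_le_sum hround
    _ = T * (Fintype.card ι * (η * L) ^ 2) - (V (T + 1) - V 1) := by
        rw [Finset.sum_sub_distrib, htel]; simp
    _ ≤ _ := by linarith

theorem two_mul_stepSize_mul_regret_le [Nonempty ι] (h : IsDecentralizedOPGD X M η T x₁ g x y)
    (hX : Convex ℝ X) (hM : M ∈ doublyStochastic ℝ ι) (hMρ : ‖M - averagingMatrix ι‖ ≤ ρ)
    (hρ : ρ < 1) (hx₁ : x₁ ∈ X) (hη : 0 ≤ η) (hL : 0 ≤ L) {f : ι → ℕ → H → ℝ}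
    (hlip : ∀ i, ∀ t ∈ Finset.Icc 1 T, ∀ a ∈ X, ∀ b ∈ X, |f i t a - f i t b| ≤ L * ‖a - b‖)
    (hw : w ∈ X)
    (hsub : ∀ i, ∀ t ∈ Finset.Icc 1 T, f i t (x i t) + ⟪g i t, w - x i t⟫ ≤ f i t w)
    (hg : ∀ i, ∀ t ∈ Finset.Icc 1 T, ‖g i t‖ ≤ L) (i : ι) :
    2 * η * (∑ t ∈ Finset.Icc 1 T, averageLoss (fun j => f j t) (x i t) -
        ∑ t ∈ Finset.Icc 1 T, averageLoss (fun j => f j t) w) ≤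
      ‖x₁ - w‖ ^ 2 + T * (η * L) ^ 2 * (4 * √(Fintype.card ι) / (1 - ρ) + 1) := by
  set K := √(Fintype.card ι) * (η * L) / (1 - ρ) with hK
  set S := ∑ t ∈ Finset.Icc 1 T, ∑ j, ⟪g j t, x j t - w⟫ with hS
  have hround : ∀ t ∈ Finset.Icc 1 T,
      averageLoss (fun j => f j t) (x i t) - averageLoss (fun j => f j t) w ≤
        (Fintype.card ι : ℝ)⁻¹ * ∑ j, ⟪g j t, x j t - w⟫ + 2 * L * K := fun t ht => by
    refine (averageLoss_sub_le_of_subgradient hL (fun j => hlip j t ht)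
      (h.mem hX hM hx₁ ht) (fun j => hsub j t ht) i).trans ?_
    gcongr
    exact h.dispersion_le hX hM hMρ hρ hx₁ hη hL hg ht
  have hregret : ∑ t ∈ Finset.Icc 1 T, averageLoss (fun j => f j t) (x i t) -
      ∑ t ∈ Finset.Icc 1 T, averageLoss (fun j => f j t) w ≤
        (Fintype.card ι : ℝ)⁻¹ * S + T * (2 * L * K) := by
    rw [← Finset.sum_sub_distrib]
    refine (Finset.sum_le_sum hround).trans_eq ?_
    simp [hS, Finset.sum_add_distrib, Finset.mul_sum]
  have hlinear : 2 * η * ((Fintype.card ι : ℝ)⁻¹ * S) ≤ ‖x₁ - w‖ ^ 2 + T * (η * L) ^ 2 := by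
    rw [mul_left_comm, inv_mul_le_iff₀ (by positivity)]
    exact h.sum_inner_le hX hM hη hg hw
  calc _ ≤ 2 * η * ((Fintype.card ι : ℝ)⁻¹ * S + T * (2 * L * K)) := by gcongr
    _ ≤ ‖x₁ - w‖ ^ 2 + T * (η * L) ^ 2 + 2 * η * (T * (2 * L * K)) := by linarith
    _ = _ := by rw [hK]; ring

end IsDecentralizedOPGD

theorem le_of_tuned_stepSize {D L T A η R : ℝ} (hD : 0 < D) (hL : 0 < L) (hT : 0 < T) (hA : 0 < A)
    (hη : η = D / (L * √T) * (√A)⁻¹) (hR : 2 * η * R ≤ D ^ 2 + T * (η * L) ^ 2 * A) :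
    R ≤ D * L * √T * √A := by
  have hη0 : 0 < η := by rw [hη]; positivity
  have hηD : η * (L * √T * √A) = D := by rw [hη]; field_simp
  have hbalance : T * (η * L) ^ 2 * A = D ^ 2 := by
    rw [← hηD, mul_pow, mul_pow, mul_pow, mul_pow, Real.sq_sqrt hT.le, Real.sq_sqrt hA.le]
    ring
  refine le_of_mul_le_mul_left ?_ (show 0 < 2 * η by positivity)
  calc 2 * η * R ≤ D ^ 2 + D ^ 2 := hbalance ▸ hR
    _ = 2 * D * (η * (L * √T * √A)) := by rw [hηD]; ring
    _ = 2 * η * (D * L * √T * √A) := by ring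

theorem stmt6_general [Nonempty ι] {X : Set H} (hX : Convex ℝ X) {W : Matrix ι ι ℝ}
    (hW : W ∈ doublyStochastic ℝ ι) (hσ : ‖W - averagingMatrix ι‖ < 1)
    {ρ : ℝ} (hρ : ρ = 1 - (1 - ‖W - averagingMatrix ι‖) / 4)
    {T : ℕ} (hT : 1 ≤ T) {D η L : ℝ} (hL : 0 < L)
    (hη : η = D / (L * √T) * (√(8 * √(Fintype.card ι) / (1 - ρ) + 1))⁻¹)
    {f : ι → ℕ → H → ℝ}
    (hlip : ∀ i, ∀ t ∈ Finset.Icc 1 T, ∀ a ∈ X, ∀ b ∈ X, |f i t a - f i t b| ≤ L * ‖a - b‖)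
    {x₁ w : H} (hx₁ : x₁ ∈ X) (hw : w ∈ X) (hD : ‖x₁ - w‖ ≤ D) {x y g : ι → ℕ → H}
    (hinit : ∀ i, x i 1 = x₁)
    (hsub : ∀ i, ∀ t ∈ Finset.Icc 1 T, f i t (x i t) + ⟪g i t, w - x i t⟫ ≤ f i t w)
    (hg : ∀ i, ∀ t ∈ Finset.Icc 1 T, ‖g i t‖ ≤ L)
    (hproj : ∀ i, ∀ t ∈ Finset.Icc 1 T, y i (t + 1) ∈ X ∧
      ∀ w ∈ X, ‖y i (t + 1) - (x i t - η • g i t)‖ ≤ ‖w - (x i t - η • g i t)‖)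
    (hcons : ∀ i, ∀ t ∈ Finset.Icc 1 T,
      x i (t + 1) = y i (t + 1) + (2 : ℝ)⁻¹ • ∑ j, W i j • (y j (t + 1) - y i (t + 1)))
    (i : ι) :
    ∑ t ∈ Finset.Icc 1 T, averageLoss (fun j => f j t) (x i t) -
        ∑ t ∈ Finset.Icc 1 T, averageLoss (fun j => f j t) w ≤
      D * L * √T * √(8 * √(Fintype.card ι) / (1 - ρ) + 1) := by
  have hrun : IsDecentralizedOPGD X (lazyMatrix W) η T x₁ g x y := ⟨hinit, hproj, fun i t ht => by
    rw [hcons i t ht, lazyMatrix_smul_apply (sum_row_of_mem_doublyStochastic hW)]⟩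
  have hlazy : ‖lazyMatrix W - averagingMatrix ι‖ ≤ ρ :=
    (l2_opNorm_lazyMatrix_sub_averagingMatrix_le W).trans (by linarith)
  have hgap : 0 < 1 - ρ := by linarith
  rcases ((norm_nonneg _).trans hD).eq_or_lt' with rfl | hDpos
  · obtain rfl : η = 0 := by simp [hη]
    obtain rfl : x₁ = w := by simpa [sub_eq_zero] using hD
    refine le_of_eq ?_
    rw [zero_mul, zero_mul, zero_mul, sub_eq_zero]
    exact Finset.sum_congr rfl fun t ht => by
      rw [hrun.eq_start_of_stepSize_eq_zero (lazyMatrix_mem_doublyStochastic hW) hx₁ ht]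
  · have hη0 : 0 ≤ η := by rw [hη]; positivity
    refine le_of_tuned_stepSize hDpos hL (Nat.cast_pos.2 hT) (by positivity) hη ?_
    refine (hrun.two_mul_stepSize_mul_regret_le hX (lazyMatrix_mem_doublyStochastic hW) hlazy
      (by linarith) hx₁ hη0 hL.le hlip hw hsub hg i).trans ?_
    gcongr
    norm_num

end OnlineGradientDescent

theorem stmt6 {H : Type*} [NormedAddCommGroup H] [InnerProductSpace ℝ H] [CompleteSpace H]
    (X : Set H) (hXne : X.Nonempty) (hXcl : IsClosed X) (hXcv : Convex ℝ X)
    (D : ℝ) (hdiam : ∀ a ∈ X, ∀ b ∈ X, ‖a - b‖ ≤ D)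
    {n : ℕ} (hn : 1 ≤ n) (W : Matrix (Fin n) (Fin n) ℝ)
    (hsymm : W.IsSymm)
    (hnonneg : ∀ i j, 0 ≤ W i j)
    (hrow : ∀ i, ∑ j, W i j = 1)
    (hcol : ∀ j, ∑ i, W i j = 1)
    (hσ : sigma2 W < 1)
    (ρ : ℝ) (hρ : ρ = 1 - (1 - sigma2 W) / 4)
    (T : ℕ) (hT : 1 ≤ T) (η L : ℝ) (hL : 0 < L)
    (hη : η = D / (L * Real.sqrt T) * (Real.sqrt (8 * Real.sqrt n / (1 - ρ) + 1))⁻¹)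
    (f : Fin n → ℕ → H → ℝ)
    (hconv : ∀ i, ∀ t ∈ Finset.Icc 1 T, ConvexOn ℝ X (f i t))
    (hlip : ∀ i, ∀ t ∈ Finset.Icc 1 T, ∀ a ∈ X, ∀ b ∈ X,
      |f i t a - f i t b| ≤ L * ‖a - b‖)
    (x₁ : H) (hx₁ : x₁ ∈ X)
    (x y : Fin n → ℕ → H) (g : Fin n → ℕ → H)
    (hinit : ∀ i, x i 1 = x₁)
    -- `g i t` is a subgradient of `f i t` at `x i t` on `X`, of norm at most `L`
    (hsub : ∀ i, ∀ t ∈ Finset.Icc 1 T, ∀ w ∈ X,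
      f i t w ≥ f i t (x i t) + ⟪g i t, w - x i t⟫)
    (hg : ∀ i, ∀ t ∈ Finset.Icc 1 T, ‖g i t‖ ≤ L)
    -- `y i (t+1)` is the metric projection of `x i t - η • g i t` onto `X`
    (hproj : ∀ i, ∀ t ∈ Finset.Icc 1 T, y i (t + 1) ∈ X ∧
      ∀ w ∈ X, ‖y i (t + 1) - (x i t - η • g i t)‖ ≤ ‖w - (x i t - η • g i t)‖)
    (hcons : ∀ i, ∀ t ∈ Finset.Icc 1 T,
      x i (t + 1) = y i (t + 1) + (2 : ℝ)⁻¹ • ∑ j, W i j • (y j (t + 1) - y i (t + 1))) :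
    ∀ xstar ∈ X,
      (n : ℝ)⁻¹ * ∑ t ∈ Finset.Icc 1 T, ∑ i, ((n : ℝ)⁻¹ * ∑ j, f j t (x i t)) -
          ∑ t ∈ Finset.Icc 1 T, ((n : ℝ)⁻¹ * ∑ j, f j t xstar) ≤
        D * L * Real.sqrt T * Real.sqrt (8 * Real.sqrt n / (1 - ρ) + 1) := by
  have : Nonempty (Fin n) := ⟨⟨0, hn⟩⟩
  rw [sigma2_eq] at hσ hρ
  intro xstar hxs
  simpa only [averageLoss, Fintype.card_fin] using inv_card_mul_sum_sum_sub_le fun i =>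
    stmt6_general hXcv (mem_doublyStochastic_iff_sum.2 ⟨hnonneg, hrow, hcol⟩) hσ hρ hT hL
      (by simpa only [Fintype.card_fin] using hη) hlip hx₁ hxs (hdiam x₁ hx₁ xstar hxs) hinit
      (fun i t ht => hsub i t ht xstar hxs) hg hproj hcons i
end

section
/- Let d ≥ 1, let f : ℝᵈ → ℝ be continuously differentiable with ‖∇f(z)‖ ≤ L for all z (so f is L-Lipschitz), let δ > 0 and x ∈ ℝᵈ. Define the smoothed function f^δ(x) := the average of f(x + δv) over v in the closed unit ball with respect to the uniform (normalized Lebesgue) probability measure. Then f^δ is differentiable at x and the two-point gradient estimator averages to its gradient: ∫_{S^{d−1}} (d/(2δ)) (f(x + δu) − f(x − δu)) u dσ(u) = ∇f^δ(x), where σ is the uniform probability measure on the unit sphere S^{d−1} ⊂ ℝᵈ and the integral is a Bochner integral of the vector-valued integrand. -/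
open MeasureTheory

/-- The uniform probability measure on the unit sphere of a finite-dimensional
real inner product space, obtained by normalizing the surface measure
`volume.toSphere`. -/
noncomputable def sphereUniform (E : Type*) [NormedAddCommGroup E] [InnerProductSpace ℝ E]
    [FiniteDimensional ℝ E] [MeasurableSpace E] [BorelSpace E] :
    Measure (Metric.sphere (0 : E) 1) :=
  ((volume : Measure E).toSphere Set.univ)⁻¹ • (volume : Measure E).toSphere

/-!
The identity amounts to the divergence theorem on the unit ball. To avoid a boundary term, integrate
by parts against the compactly supported `C¹` cutoff `max (R² - ‖v‖²) 0 ^ 2`, whose derivative is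
`-4 max (R² - ‖v‖²) 0 ⟪v, ·⟫`. In polar coordinates this reads
`∫₀ᴿ (R² - r²)² A(r) dr = 4 ∫₀ᴿ (R² - r²) B(r) dr` for all `R > 0`, where `A(r)` and `B(r)` are the
integrals of `∂ₑg` and `⟪v, e⟫ g` over the sphere of radius `r`, for a fixed direction `e`.
Differentiating twice in `R` leaves `R ∫₀ᴿ A = B(R)`, the divergence theorem for `g e`.
Take `g v = f (x + δ v)`; the term with `-δ` contributes the same amount because the ball is
symmetric, and the gradient of the smoothed function is found by differentiating under the integral
sign.
-/

open Module Set Metric Filter Topology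
open scoped RealInnerProductSpace

section SquaredKernel

variable {F : Type*} [NormedAddCommGroup F] [NormedSpace ℝ F] {A B : ℝ → F}

theorem integral_sub_sq_pow_succ_smul (hA : Continuous A) (k : ℕ) (R : ℝ) :
    ∫ r in (0 : ℝ)..R, (R ^ 2 - r ^ 2) ^ (k + 1) • A r =
      R ^ 2 • (∫ r in (0 : ℝ)..R, (R ^ 2 - r ^ 2) ^ k • A r) -
        ∫ r in (0 : ℝ)..R, (R ^ 2 - r ^ 2) ^ k • r ^ 2 • A r := by
  rw [← intervalIntegral.integral_smul, ← intervalIntegral.integral_sub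
    (Continuous.intervalIntegrable (by fun_prop) _ _)
    (Continuous.intervalIntegrable (by fun_prop) _ _)]
  congr 1 with r
  module

variable [CompleteSpace F]

theorem hasDerivAt_integral_sub_sq_pow_smul (hA : Continuous A) (k : ℕ) (R : ℝ) :
    HasDerivAt (fun R ↦ ∫ r in (0 : ℝ)..R, (R ^ 2 - r ^ 2) ^ (k + 1) • A r)
      ((2 * (k + 1) * R) • ∫ r in (0 : ℝ)..R, (R ^ 2 - r ^ 2) ^ k • A r) R := by
  have hsq : HasDerivAt (fun R : ℝ ↦ R ^ 2) (2 * R) R := by simpa using hasDerivAt_pow 2 R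
  induction k generalizing A with
  | zero =>
    simp only [integral_sub_sq_pow_succ_smul hA, pow_zero, one_smul]
    have hA' : Continuous fun r ↦ r ^ 2 • A r := by fun_prop
    convert! (hsq.smul (hA.integral_hasStrictDerivAt 0 R).hasDerivAt).sub
      (hA'.integral_hasStrictDerivAt 0 R).hasDerivAt using 1
    simp
  | succ k ih =>
    simp only [integral_sub_sq_pow_succ_smul hA (k + 1)]
    convert! (hsq.smul (ih hA)).sub (ih (A := fun r ↦ r ^ 2 • A r) (by fun_prop)) using 1
    rw [integral_sub_sq_pow_succ_smul hA k]
    push_cast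
    module

theorem smul_integral_eq_of_integral_sub_sq_smul_eq (hA : Continuous A) (hB : Continuous B)
    (hAB : ∀ R > 0, ∫ r in (0 : ℝ)..R, (R ^ 2 - r ^ 2) ^ 2 • A r =
      (4 : ℝ) • ∫ r in (0 : ℝ)..R, (R ^ 2 - r ^ 2) • B r) {R : ℝ} (hR : 0 < R) :
    R • ∫ r in (0 : ℝ)..R, A r = B R := by
  have hone (R : ℝ) (hR : 0 < R) : ∫ r in (0 : ℝ)..R, (R ^ 2 - r ^ 2) • A r =
      (2 : ℝ) • ∫ r in (0 : ℝ)..R, B r := by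
    have hderivA := hasDerivAt_integral_sub_sq_pow_smul hA 1 R
    have hderivB := (hasDerivAt_integral_sub_sq_pow_smul hB 0 R).const_smul (4 : ℝ)
    have heq := hderivA.unique <| hderivB.congr_of_eventuallyEq <| by
      filter_upwards [lt_mem_nhds hR] with S hS using by simpa using hAB S hS
    refine smul_right_injective F (show 4 * R ≠ 0 by positivity) ?_
    convert! heq using 1 <;> norm_num [smul_smul]
    ring_nf
  have hderivA := hasDerivAt_integral_sub_sq_pow_smul hA 0 R
  have hderivB := (hB.integral_hasStrictDerivAt 0 R).hasDerivAt.const_smul (2 : ℝ)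
  have heq := hderivA.unique <| hderivB.congr_of_eventuallyEq <| by
    filter_upwards [lt_mem_nhds hR] with S hS using by simpa using hone S hS
  refine smul_right_injective F (two_ne_zero (α := ℝ)) ?_
  simpa [smul_smul] using heq

end SquaredKernel

theorem hasDerivAt_max_zero_sq (s : ℝ) :
    HasDerivAt (fun s : ℝ ↦ max s 0 ^ 2) (2 * max s 0) s := by
  rcases lt_trichotomy s 0 with hs | rfl | hs
  · have hzero : (fun s : ℝ ↦ max s 0 ^ 2) =ᶠ[𝓝 s] fun _ ↦ 0 := by
      filter_upwards [gt_mem_nhds hs] with t ht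
      simp [ht.le]
    simpa [hs.le] using (hasDerivAt_const s (0 : ℝ)).congr_of_eventuallyEq hzero
  · have hbound : (fun s : ℝ ↦ max s 0 ^ 2) =O[𝓝 0] fun s ↦ ‖s - 0‖ ^ 2 := by
      refine .of_norm_le fun t ↦ ?_
      rw [sub_zero, norm_pow]
      gcongr
      simpa using abs_max_sub_max_le_abs t 0 0
    simpa using (hbound.hasFDerivAt one_lt_two).hasDerivAt
  · have hsq : (fun s : ℝ ↦ max s 0 ^ 2) =ᶠ[𝓝 s] fun s ↦ s ^ 2 := by
      filter_upwards [lt_mem_nhds hs] with t ht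
      simp [ht.le]
    simpa [hs.le] using (hasDerivAt_pow 2 s).congr_of_eventuallyEq hsq

section Norm

variable {E : Type*} [NormedAddCommGroup E] {R : ℝ}

theorem max_sub_norm_sq_eq_zero_of_notMem_ball (hR : 0 ≤ R) {v : E} (hv : v ∉ ball 0 R) :
    max (R ^ 2 - ‖v‖ ^ 2) 0 = 0 := by
  rw [mem_ball_zero_iff, not_lt] at hv
  exact max_eq_right (sub_nonpos.2 (by gcongr))

theorem hasCompactSupport_max_sub_norm_sq_pow [ProperSpace E] (hR : 0 ≤ R) {k : ℕ} (hk : k ≠ 0) :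
    HasCompactSupport fun v : E ↦ max (R ^ 2 - ‖v‖ ^ 2) 0 ^ k :=
  .intro (isCompact_closedBall 0 R) fun v hv ↦ by
    rw [max_sub_norm_sq_eq_zero_of_notMem_ball hR (notMem_subset ball_subset_closedBall hv),
      zero_pow hk]

theorem integral_max_sub_norm_sq_pow_smul [MeasurableSpace E] [OpensMeasurableSpace E]
    {F : Type*} [NormedAddCommGroup F] [NormedSpace ℝ F] (μ : Measure E)
    (hR : 0 ≤ R) {k : ℕ} (hk : k ≠ 0) (H : E → F) :
    ∫ v, max (R ^ 2 - ‖v‖ ^ 2) 0 ^ k • H v ∂μ =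
      ∫ v in ball 0 R, (R ^ 2 - ‖v‖ ^ 2) ^ k • H v ∂μ := by
  rw [← setIntegral_eq_integral_of_forall_compl_eq_zero (s := ball 0 R) fun v hv ↦ by
    rw [max_sub_norm_sq_eq_zero_of_notMem_ball hR hv, zero_pow hk, zero_smul]]
  refine setIntegral_congr_fun measurableSet_ball fun v hv ↦ ?_
  have hnonneg : 0 ≤ R ^ 2 - ‖v‖ ^ 2 := sub_nonneg.2 (by gcongr; exact (mem_ball_zero_iff.1 hv).le)
  simp only [max_eq_left hnonneg]

theorem setIntegral_ball_comp_neg [MeasurableSpace E] [MeasurableNeg E] {F : Type*}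
    [NormedAddCommGroup F] [NormedSpace ℝ F] (μ : Measure E) [μ.IsNegInvariant] (H : E → F) :
    ∫ v in ball (0 : E) R, H (-v) ∂μ = ∫ v in ball (0 : E) R, H v ∂μ := by
  simpa using (Measure.measurePreserving_neg μ).setIntegral_preimage_emb
    (MeasurableEquiv.neg E).measurableEmbedding H (ball 0 R)

end Norm

section Inner

variable {E : Type*} [NormedAddCommGroup E] [InnerProductSpace ℝ E]

theorem hasFDerivAt_max_sub_norm_sq_sq (R : ℝ) (v : E) :
    HasFDerivAt (fun v : E ↦ max (R ^ 2 - ‖v‖ ^ 2) 0 ^ 2)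
      ((-4 * max (R ^ 2 - ‖v‖ ^ 2) 0) • innerSL ℝ v) v := by
  have hinner : HasFDerivAt (fun v : E ↦ R ^ 2 - ‖v‖ ^ 2) (-(2 • innerSL ℝ v)) v :=
    (hasStrictFDerivAt_norm_sq v).hasFDerivAt.const_sub _
  convert! (hasDerivAt_max_zero_sq (R ^ 2 - ‖v‖ ^ 2)).comp_hasFDerivAt v hinner using 1
  module

variable {F : Type*} [NormedAddCommGroup F] [NormedSpace ℝ F]
variable [FiniteDimensional ℝ E] [MeasurableSpace E] [BorelSpace E]
  (μ : Measure E) [μ.IsAddHaarMeasure] {g : E → F}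

theorem setIntegral_ball_sub_norm_sq_smul_fderiv (hg : ContDiff ℝ 1 g) (e : E) {R : ℝ}
    (hR : 0 ≤ R) :
    ∫ v in ball 0 R, (R ^ 2 - ‖v‖ ^ 2) ^ 2 • fderiv ℝ g v e ∂μ =
      (4 : ℝ) • ∫ v in ball 0 R, (R ^ 2 - ‖v‖ ^ 2) • ⟪v, e⟫ • g v ∂μ := by
  have hgc := hg.continuous
  have hφ (v : E) : fderiv ℝ (fun v : E ↦ max (R ^ 2 - ‖v‖ ^ 2) 0 ^ 2) v e • g v =
      (-4 : ℝ) • max (R ^ 2 - ‖v‖ ^ 2) 0 ^ 1 • ⟪v, e⟫ • g v := by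
    simp [(hasFDerivAt_max_sub_norm_sq_sq R v).fderiv, smul_smul, mul_assoc]
  have hint {k : ℕ} (hk : k ≠ 0) {H : E → F} (hH : Continuous H) :
      Integrable (fun v ↦ max (R ^ 2 - ‖v‖ ^ 2) 0 ^ k • H v) μ :=
    Continuous.integrable_of_hasCompactSupport (by fun_prop)
      (hasCompactSupport_max_sub_norm_sq_pow hR hk).smul_right
  calc
    ∫ v in ball 0 R, (R ^ 2 - ‖v‖ ^ 2) ^ 2 • fderiv ℝ g v e ∂μ
    _ = ∫ v, max (R ^ 2 - ‖v‖ ^ 2) 0 ^ 2 • fderiv ℝ g v e ∂μ :=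
      (integral_max_sub_norm_sq_pow_smul μ hR two_ne_zero _).symm
    _ = -∫ v, fderiv ℝ (fun v ↦ max (R ^ 2 - ‖v‖ ^ 2) 0 ^ 2) v e • g v ∂μ := by
      refine integral_smul_fderiv_eq_neg_fderiv_smul_of_integrable ?_
        (hint two_ne_zero (by fun_prop)) (hint two_ne_zero hgc)
        (fun v _ ↦ (hasFDerivAt_max_sub_norm_sq_sq R v).differentiableAt)
        (fun v _ ↦ hg.differentiable one_ne_zero v)
      simp only [hφ]
      exact (hint one_ne_zero (by fun_prop)).smul _
    _ = (4 : ℝ) • ∫ v, max (R ^ 2 - ‖v‖ ^ 2) 0 ^ 1 • ⟪v, e⟫ • g v ∂μ := by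
      simp only [hφ, neg_smul, integral_neg, integral_smul, neg_neg]
    _ = (4 : ℝ) • ∫ v in ball 0 R, (R ^ 2 - ‖v‖ ^ 2) • ⟪v, e⟫ • g v ∂μ := by
      rw [integral_max_sub_norm_sq_pow_smul μ hR one_ne_zero]
      simp only [pow_one]

end Inner

section Polar

variable {E F : Type*} [NormedAddCommGroup E] [NormedSpace ℝ E] [MeasurableSpace E]
  [NormedAddCommGroup F] [NormedSpace ℝ F] (μ : Measure E)

/-- The surface integral of `H` over the sphere of radius `r` about the origin, pulled back to the
unit sphere; the angular integral in polar coordinates. -/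
noncomputable def sphereIntegral (H : E → F) (r : ℝ) : F :=
  r ^ (finrank ℝ E - 1) • ∫ u : sphere (0 : E) 1, H (r • (u : E)) ∂μ.toSphere

theorem sphereIntegral_norm_smul (w : ℝ → ℝ) (H : E → F) {r : ℝ} (hr : 0 ≤ r) :
    sphereIntegral μ (fun v ↦ w ‖v‖ • H v) r = w r • sphereIntegral μ H r := by
  simp only [sphereIntegral, norm_smul, norm_eq_of_mem_sphere, mul_one, Real.norm_of_nonneg hr,
    integral_smul, smul_comm (w r)]

variable [FiniteDimensional ℝ E] [BorelSpace E]

theorem continuous_sphereIntegral [μ.IsAddHaarMeasure] {H : E → F} (hH : Continuous H) :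
    Continuous (sphereIntegral μ H) := by
  have hint := continuous_parametric_integral_of_continuous (μ := μ.toSphere)
    (f := fun (r : ℝ) (u : sphere (0 : E) 1) ↦ H (r • (u : E))) (by fun_prop) isCompact_univ
  rw [Measure.restrict_univ] at hint
  exact (continuous_pow _).smul hint

variable [Nontrivial E] [μ.IsAddHaarMeasure] {H : E → F}

theorem setAverage_closedBall_eq_setAverage_ball (H : E → F) (x : E) (r : ℝ) :
    ⨍ v in closedBall x r, H v ∂μ = ⨍ v in ball x r, H v ∂μ :=
  (setAverage_congr <| ae_eq_of_subset_of_measure_ge ball_subset_closedBall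
    (μ.addHaar_closedBall_eq_addHaar_ball x r).le measurableSet_ball.nullMeasurableSet
    measure_closedBall_lt_top.ne).symm

theorem integral_eq_integral_Ioi_sphereIntegral (hH : Integrable H μ) :
    ∫ v, H v ∂μ = ∫ r in Ioi (0 : ℝ), sphereIntegral μ H r := by
  set n := finrank ℝ E - 1
  have hmp := μ.measurePreserving_homeomorphUnitSphereProd
  have hemb := (homeomorphUnitSphereProd E).measurableEmbedding
  let polar (p : sphere (0 : E) 1 × Ioi (0 : ℝ)) : F := H ((p.2 : ℝ) • (p.1 : E))
  have hpolar (v : ({0}ᶜ : Set E)) : polar (homeomorphUnitSphereProd E v) = H v := by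
    simp [polar, smul_smul, norm_ne_zero_iff.2 v.2]
  have hint : Integrable polar (μ.toSphere.prod (.volumeIoiPow n)) := by
    rw [← hmp.integrable_comp_emb hemb]
    simp only [Function.comp_def, hpolar]
    exact (integrableOn_iff_comap_subtypeVal (measurableSet_singleton _).compl).1 hH.integrableOn
  calc
    ∫ v, H v ∂μ = ∫ v : ({0}ᶜ : Set E), H v ∂(μ.comap (↑)) := by
      rw [integral_subtype_comap (measurableSet_singleton _).compl H, restrict_compl_singleton]
    _ = ∫ p, polar p ∂μ.toSphere.prod (.volumeIoiPow n) := by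
      rw [← hmp.integral_comp hemb]
      simp only [hpolar]
    _ = ∫ r : Ioi (0 : ℝ), (∫ u : sphere (0 : E) 1, H ((r : ℝ) • (u : E)) ∂μ.toSphere)
          ∂.volumeIoiPow n := integral_prod_symm _ hint
    _ = ∫ r in Ioi (0 : ℝ), sphereIntegral μ H r := by
      simp only [Measure.volumeIoiPow, ENNReal.ofReal]
      rw [integral_withDensity_eq_integral_smul
          (measurable_subtype_coe.pow_const _).real_toNNReal,
        integral_subtype_comap measurableSet_Ioi fun a ↦ Real.toNNReal (a ^ n) •
          ∫ u : sphere (0 : E) 1, H (a • (u : E)) ∂μ.toSphere,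
        setIntegral_congr_fun measurableSet_Ioi fun r hr ↦ ?_]
      rw [NNReal.smul_def, Real.coe_toNNReal _ (pow_nonneg hr.out.le _), sphereIntegral]

theorem setIntegral_ball_eq_integral_sphereIntegral {R : ℝ} (hR : 0 ≤ R)
    (hH : IntegrableOn H (ball 0 R) μ) :
    ∫ v in ball 0 R, H v ∂μ = ∫ r in (0 : ℝ)..R, sphereIntegral μ H r := by
  have hindicator (r : ℝ) (hr : 0 < r) : sphereIntegral μ ((ball 0 R).indicator H) r =
      (Iio R).indicator (sphereIntegral μ H) r := by
    have hmem (u : sphere (0 : E) 1) : r • (u : E) ∈ ball (0 : E) R ↔ r < R := by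
      simp [norm_smul, abs_of_pos hr]
    by_cases hrR : r < R <;> simp [sphereIntegral, indicator, hmem, hrR, -mem_ball]
  calc
    ∫ v in ball 0 R, H v ∂μ
    _ = ∫ r in Ioi (0 : ℝ), sphereIntegral μ ((ball 0 R).indicator H) r := by
      rw [← integral_indicator measurableSet_ball,
        integral_eq_integral_Ioi_sphereIntegral μ (hH.integrable_indicator measurableSet_ball)]
    _ = ∫ r in Ioi (0 : ℝ) ∩ Iio R, sphereIntegral μ H r := by
      rw [setIntegral_congr_fun measurableSet_Ioi hindicator,
        setIntegral_indicator measurableSet_Iio]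
    _ = ∫ r in (0 : ℝ)..R, sphereIntegral μ H r := by
      rw [Ioi_inter_Iio, intervalIntegral.integral_of_le hR, integral_Ioc_eq_integral_Ioo]

theorem setIntegral_ball_norm_smul {w : ℝ → ℝ} (hw : Continuous w) (hH : Continuous H) {R : ℝ}
    (hR : 0 ≤ R) :
    ∫ v in ball 0 R, w ‖v‖ • H v ∂μ = ∫ r in (0 : ℝ)..R, w r • sphereIntegral μ H r := by
  have hint : IntegrableOn (fun v ↦ w ‖v‖ • H v) (ball 0 R) μ :=
    (Continuous.continuousOn (by fun_prop)).integrableOn_compact (isCompact_closedBall 0 R)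
      |>.mono_set ball_subset_closedBall
  rw [setIntegral_ball_eq_integral_sphereIntegral μ hR hint]
  refine intervalIntegral.integral_congr fun r hr ↦ sphereIntegral_norm_smul μ w H ?_
  exact (uIcc_of_le hR ▸ hr).1

end Polar

section Divergence

variable {E F : Type*} [NormedAddCommGroup E] [InnerProductSpace ℝ E] [FiniteDimensional ℝ E]
  [Nontrivial E] [MeasurableSpace E] [BorelSpace E] [NormedAddCommGroup F] [NormedSpace ℝ F]
  [CompleteSpace F] (μ : Measure E) [μ.IsAddHaarMeasure]

theorem setIntegral_ball_fderiv_apply {g : E → F} (hg : ContDiff ℝ 1 g) (e : E) {R : ℝ}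
    (hR : 0 < R) :
    ∫ v in ball 0 R, fderiv ℝ g v e ∂μ =
      R ^ (finrank ℝ E - 1) •
        ∫ u : sphere (0 : E) 1, ⟪(u : E), e⟫ • g (R • (u : E)) ∂μ.toSphere := by
  have hgc := hg.continuous
  have hg' : Continuous fun v ↦ fderiv ℝ g v e :=
    (hg.continuous_fderiv one_ne_zero).clm_apply continuous_const
  have hflux : Continuous fun v ↦ ⟪v, e⟫ • g v := by fun_prop
  have hweighted (S : ℝ) (hS : 0 < S) :
      ∫ r in (0 : ℝ)..S, (S ^ 2 - r ^ 2) ^ 2 • sphereIntegral μ (fun v ↦ fderiv ℝ g v e) r =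
        (4 : ℝ) •
          ∫ r in (0 : ℝ)..S, (S ^ 2 - r ^ 2) • sphereIntegral μ (fun v ↦ ⟪v, e⟫ • g v) r := by
    rw [← setIntegral_ball_norm_smul μ (w := fun r ↦ (S ^ 2 - r ^ 2) ^ 2) (by fun_prop) hg' hS.le,
      ← setIntegral_ball_norm_smul μ (w := fun r ↦ S ^ 2 - r ^ 2) (by fun_prop) hflux hS.le,
      setIntegral_ball_sub_norm_sq_smul_fderiv μ hg e hS.le]
  refine smul_right_injective F hR.ne' ?_
  calc
    R • ∫ v in ball 0 R, fderiv ℝ g v e ∂μ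
    _ = R • ∫ r in (0 : ℝ)..R, sphereIntegral μ (fun v ↦ fderiv ℝ g v e) r := by
      simpa using congrArg (R • ·) (setIntegral_ball_norm_smul μ continuous_one hg' hR.le)
    _ = sphereIntegral μ (fun v ↦ ⟪v, e⟫ • g v) R :=
      smul_integral_eq_of_integral_sub_sq_smul_eq (continuous_sphereIntegral μ hg')
        (continuous_sphereIntegral μ hflux) hweighted hR
    _ = R • R ^ (finrank ℝ E - 1) •
        ∫ u : sphere (0 : E) 1, ⟪(u : E), e⟫ • g (R • (u : E)) ∂μ.toSphere := by
      simp only [sphereIntegral, real_inner_smul_left, mul_smul, integral_smul]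
      rw [smul_comm]

variable {f : E → F}

theorem integral_toSphere_inner_smul_comp_add_smul (hf : ContDiff ℝ 1 f) (δ : ℝ) (x e : E) :
    ∫ u : sphere (0 : E) 1, ⟪(u : E), e⟫ • f (x + δ • (u : E)) ∂μ.toSphere =
      δ • ∫ v in ball (0 : E) 1, fderiv ℝ f (x + δ • v) e ∂μ := by
  have hfderiv (v : E) : fderiv ℝ (fun v ↦ f (x + δ • v)) v e = δ • fderiv ℝ f (x + δ • v) e := by
    rw [fderiv_comp_smul (f := fun w ↦ f (x + w)), fderiv_comp_add_left, smul_apply]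
  have hdiv := setIntegral_ball_fderiv_apply μ (g := fun v ↦ f (x + δ • v)) (by fun_prop) e one_pos
  simpa only [hfderiv, integral_smul, one_pow, one_smul] using hdiv.symm

theorem integral_toSphere_inner_smul_sub (hf : ContDiff ℝ 1 f) (δ : ℝ) (x e : E) :
    ∫ u : sphere (0 : E) 1,
        ⟪(u : E), e⟫ • (f (x + δ • (u : E)) - f (x - δ • (u : E))) ∂μ.toSphere =
      (2 * δ) • ∫ v in ball (0 : E) 1, fderiv ℝ f (x + δ • v) e ∂μ := by
  have hfc := hf.continuous
  have hint (s : ℝ) :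
      Integrable (fun u : sphere (0 : E) 1 ↦ ⟪(u : E), e⟫ • f (x + s • (u : E))) μ.toSphere :=
    Continuous.integrable_of_hasCompactSupport (by fun_prop) (.of_compactSpace _)
  have hneg : ∫ u : sphere (0 : E) 1, ⟪(u : E), e⟫ • f (x + -δ • (u : E)) ∂μ.toSphere =
      -δ • ∫ v in ball (0 : E) 1, fderiv ℝ f (x + δ • v) e ∂μ := by
    rw [integral_toSphere_inner_smul_comp_add_smul μ hf,
      ← setIntegral_ball_comp_neg μ fun v ↦ fderiv ℝ f (x + δ • v) e]
    simp only [smul_neg, neg_smul]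
  simp only [sub_eq_add_neg x, ← neg_smul, smul_sub]
  rw [integral_sub (hint δ) (hint (-δ)), hneg, integral_toSphere_inner_smul_comp_add_smul μ hf]
  module

end Divergence

section Smoothing

variable {E F : Type*} [NormedAddCommGroup E] [NormedSpace ℝ E] [MeasureSpace E]
  [NormedAddCommGroup F] [NormedSpace ℝ F] {f : E → F}

/-- The smoothed function `f^δ`: the average of `f` over the ball of radius `δ` about `w`, with
the ball rescaled to the closed unit ball. -/
noncomputable def ballSmoothing (f : E → F) (δ : ℝ) (w : E) : F :=
  ⨍ v in closedBall (0 : E) 1, f (w + δ • v)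

theorem hasFDerivAt_ballSmoothing [FiniteDimensional ℝ E] [BorelSpace E]
    [IsFiniteMeasureOnCompacts (volume : Measure E)] (hf : ContDiff ℝ 1 f) (δ : ℝ) (x : E) :
    HasFDerivAt (ballSmoothing f δ) (⨍ v in closedBall (0 : E) 1, fderiv ℝ f (x + δ • v)) x := by
  have hfc := hf.continuous
  have hball := isCompact_closedBall (0 : E) 1
  obtain ⟨C, hC⟩ := ((isCompact_closedBall x 1).prod hball).exists_bound_of_continuousOn
    (f := fun p : E × E ↦ fderiv ℝ f (p.1 + δ • p.2)) (by fun_prop)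
  unfold ballSmoothing
  simp only [setAverage_eq]
  refine HasFDerivAt.fun_const_smul (R := ℝ) ?_ _
  refine hasFDerivAt_integral_of_dominated_of_fderiv_le
    (F' := fun w v ↦ fderiv ℝ f (w + δ • v)) (bound := fun _ ↦ C) (closedBall_mem_nhds x one_pos)
    (.of_forall fun w ↦ Continuous.aestronglyMeasurable (by fun_prop))
    ((Continuous.continuousOn (by fun_prop)).integrableOn_compact hball)
    (Continuous.aestronglyMeasurable (by fun_prop)) ?_
    (integrableOn_const hball.measure_ne_top) (.of_forall fun v w _ ↦ ?_)
  · filter_upwards [ae_restrict_mem measurableSet_closedBall] with v hv w hw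
    exact hC (w, v) ⟨hw, hv⟩
  · exact (hasFDerivAt_comp_add_right _).2 (hf.differentiable one_ne_zero _).hasFDerivAt

end Smoothing

section TwoPoint

variable {E F : Type*} [NormedAddCommGroup E] [InnerProductSpace ℝ E]

/-- The two-point gradient estimator `g^δ(x)` for the direction `u`, with `d = finrank ℝ E`. -/
noncomputable def twoPointEstimator (f : E → ℝ) (δ : ℝ) (x u : E) : E :=
  ((finrank ℝ E : ℝ) / (2 * δ) * (f (x + δ • u) - f (x - δ • u))) • u

variable [FiniteDimensional ℝ E] [MeasurableSpace E] [BorelSpace E]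
  [NormedAddCommGroup F] [NormedSpace ℝ F]

theorem integral_sphereUniform (H : sphere (0 : E) 1 → F) :
    ∫ u, H u ∂sphereUniform E =
      (finrank ℝ E * volume.real (ball (0 : E) 1))⁻¹ • ∫ u, H u ∂(volume : Measure E).toSphere := by
  rw [sphereUniform, integral_smul_measure, ENNReal.toReal_inv, ← Measure.real,
    Measure.toSphere_real_apply_univ]

variable [Nontrivial E] {f : E → ℝ} {δ : ℝ}

theorem inner_integral_twoPointEstimator (hf : ContDiff ℝ 1 f) (hδ : δ ≠ 0) (x e : E) :
    ⟪∫ u : sphere (0 : E) 1, twoPointEstimator f δ x u ∂sphereUniform E, e⟫ =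
      ⨍ v in closedBall (0 : E) 1, fderiv ℝ f (x + δ • v) e := by
  have hfc := hf.continuous
  have hd : (finrank ℝ E : ℝ) ≠ 0 := Nat.cast_ne_zero.2 finrank_pos.ne'
  have hint : Integrable (fun u : sphere (0 : E) 1 ↦ twoPointEstimator f δ x u)
      (volume : Measure E).toSphere :=
    Continuous.integrable_of_hasCompactSupport (by unfold twoPointEstimator; fun_prop)
      (.of_compactSpace _)
  have hinner (u : E) : ⟪e, twoPointEstimator f δ x u⟫ =
      finrank ℝ E / (2 * δ) * (⟪u, e⟫ • (f (x + δ • u) - f (x - δ • u))) := by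
    rw [twoPointEstimator, real_inner_smul_right, real_inner_comm, smul_eq_mul]
    ring
  rw [integral_sphereUniform, real_inner_smul_left, real_inner_comm, ← integral_inner hint,
    setAverage_closedBall_eq_setAverage_ball, setAverage_eq]
  simp only [hinner]
  rw [integral_const_mul, integral_toSphere_inner_smul_sub volume hf, smul_eq_mul, smul_eq_mul]
  field_simp

theorem stmt10_general (hf : ContDiff ℝ 1 f) (hδ : δ ≠ 0) (x : E) :
    HasGradientAt (ballSmoothing f δ)
      (∫ u : sphere (0 : E) 1, twoPointEstimator f δ x u ∂sphereUniform E) x := by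
  have hint : IntegrableOn (fun v ↦ fderiv ℝ f (x + δ • v)) (closedBall 0 1) :=
    (Continuous.continuousOn (by fun_prop)).integrableOn_compact (isCompact_closedBall 0 1)
  rw [hasGradientAt_iff_hasFDerivAt]
  convert! hasFDerivAt_ballSmoothing hf δ x using 1
  ext e
  rw [InnerProductSpace.toDual_apply_apply, inner_integral_twoPointEstimator hf hδ, setAverage_eq,
    setAverage_eq, smul_apply, ContinuousLinearMap.integral_apply hint]

end TwoPoint

theorem stmt10 (d : ℕ) (hd : 1 ≤ d)
    (f : EuclideanSpace ℝ (Fin d) → ℝ) (hf : ContDiff ℝ 1 f)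
    (L : ℝ) (hL : ∀ z, ‖gradient f z‖ ≤ L)
    (δ : ℝ) (hδ : 0 < δ) (x : EuclideanSpace ℝ (Fin d)) :
    DifferentiableAt ℝ
      (fun w => ⨍ v in Metric.closedBall (0 : EuclideanSpace ℝ (Fin d)) 1, f (w + δ • v)) x ∧
    (∫ u : Metric.sphere (0 : EuclideanSpace ℝ (Fin d)) 1,
        ((d : ℝ) / (2 * δ) *
            (f (x + δ • (u : EuclideanSpace ℝ (Fin d))) -
              f (x - δ • (u : EuclideanSpace ℝ (Fin d))))) • (u : EuclideanSpace ℝ (Fin d))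
        ∂(sphereUniform (EuclideanSpace ℝ (Fin d)))) =
      gradient
        (fun w => ⨍ v in Metric.closedBall (0 : EuclideanSpace ℝ (Fin d)) 1, f (w + δ • v)) x := by
  have : Nontrivial (EuclideanSpace ℝ (Fin d)) :=
    Module.nontrivial_of_finrank_pos (R := ℝ) (by rwa [finrank_euclideanSpace_fin])
  have hgrad := stmt10_general hf hδ.ne' x
  simp only [twoPointEstimator, finrank_euclideanSpace_fin] at hgrad
  exact ⟨hgrad.differentiableAt, hgrad.gradient.symm⟩
end
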